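/- Let d ≥ 1 and for each q ∈ {1,…,d} let m_q, n_q be positive integers and A^(q) a real m_q × n_q matrix. Given a tensor x : Fin n_1 × ⋯ × Fin n_d → ℝ, define z^(0) = x and, for q = 1,…,d, the tensor z^(q) indexed by (i_1,…,i_q, j_{q+1},…,j_d) ∈ Fin m_1 × ⋯ × Fin m_q × Fin n_{q+1} × ⋯ × Fin n_d by the sum-factorization kernel z^(q)_{(i_1,…,i_q,j_{q+1},…,j_d)} = Σ_{j_q ∈ Fin n_q} A^(q)_{i_q, j_q} · z^(q−1)_{(i_1,…,i_{q−1}, j_q, j_{q+1},…,j_d)}. Then for every multi-index (i_1,…,i_d) ∈ Fin m_1 × ⋯ × Fin m_d one has z^(d)_{(i_1,…,i_d)} = Σ_{j_1 ∈ Fin n_1} ⋯ Σ_{j_d ∈ Fin n_d} (∏_{q=1}^d A^(q)_{i_q, j_q}) · x_{(j_1,…,j_d)}; i.e., the sum-factorization (dimension-by-dimension) algorithm computes the full tensor contraction y_i = Σ_j (∏_q A^(q)_{i_q,j_q}) x_j. -/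

import Mathlib

open Finset

/-- **Correctness of the sum-factorization (dimension-by-dimension) algorithm.**
Given matrices `A q : Matrix (Fin (m q)) (Fin (n q)) ℝ` for each direction `q : Fin d`
and an input tensor `x`, any family of intermediate tensors `z` satisfying
`z 0 = x` and the sum-factorization kernel recurrence
`z (q+1) i j = ∑ t, A q (i q) t * z q i (update j q t)`
computes, at stage `d`, the full tensor contraction
`∑ j', (∏ q, A q (i q) (j' q)) * x j'`. -/
theorem sum_factorization_correct
    (d : ℕ) (hd : 1 ≤ d)
    (m n : Fin d → ℕ)
    (A : ∀ q : Fin d, Matrix (Fin (m q)) (Fin (n q)) ℝ)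
    (x : (∀ k : Fin d, Fin (n k)) → ℝ)
    (z : ℕ → (∀ k : Fin d, Fin (m k)) → (∀ k : Fin d, Fin (n k)) → ℝ)
    (hz0 : ∀ i j, z 0 i j = x j)
    (hzrec : ∀ (q : Fin d) (i : ∀ k, Fin (m k)) (j : ∀ k, Fin (n k)),
      z ((q : ℕ) + 1) i j =
        ∑ t : Fin (n q), A q (i q) t * z (q : ℕ) i (Function.update j q t)) :
    ∀ (i : ∀ k, Fin (m k)) (j : ∀ k, Fin (n k)),
      z d i j =
        ∑ j' : ∀ k, Fin (n k), (∏ q, A q (i q) (j' q)) * x j' := by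
  classical
  have key : ∀ q : ℕ, q ≤ d → ∀ (i : ∀ k, Fin (m k)) (j : ∀ k, Fin (n k)),
      z q i j = ∑ j' : ∀ k, Fin (n k),
        if (∀ k : Fin d, q ≤ (k : ℕ) → j' k = j k) then
          (∏ k ∈ Finset.univ.filter (fun k : Fin d => (k : ℕ) < q), A k (i k) (j' k)) * x j'
        else 0 := by
    intro q
    induction q with
    | zero =>
      intro _ i j
      have h : ∀ j' : (∀ k, Fin (n k)), (∀ k : Fin d, 0 ≤ (k : ℕ) → j' k = j k) ↔ j' = j := by
        intro j'
        simp [funext_iff]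
      simp only [h]
      simp [hz0]
    | succ q ih =>
      intro hq i j
      have hrec := hzrec ⟨q, hq⟩ i j
      simp only at hrec
      rw [hrec]
      have hc : ∀ (t : Fin (n ⟨q, hq⟩)) (j' : ∀ k, Fin (n k)),
          (∀ k : Fin d, q ≤ (k : ℕ) → j' k = Function.update j ⟨q, hq⟩ t k) ↔
          (t = j' ⟨q, hq⟩ ∧ ∀ k : Fin d, q + 1 ≤ (k : ℕ) → j' k = j k) := by
        intro t j'
        constructor
        · intro h
          refine ⟨?_, ?_⟩
          · have := h ⟨q, hq⟩ le_rfl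
            simpa using this.symm
          · intro k hk
            have hne : k ≠ ⟨q, hq⟩ := by
              rintro rfl
              simp at hk
            have := h k (by omega)
            rwa [Function.update_of_ne hne] at this
        · rintro ⟨rfl, h⟩ k hk
          by_cases hne : k = ⟨q, hq⟩
          · subst hne
            simp
          · rw [Function.update_of_ne hne]
            apply h
            have : (k : ℕ) ≠ q := fun e => hne (Fin.ext e)
            omega
      have hs : Finset.univ.filter (fun k : Fin d => (k : ℕ) < q + 1) =
          insert ⟨q, hq⟩ (Finset.univ.filter (fun k : Fin d => (k : ℕ) < q)) := by
        ext k
        simp [Fin.ext_iff]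
        omega
      simp only [ih (by omega), hc, Finset.mul_sum]
      rw [Finset.sum_comm]
      refine Finset.sum_congr rfl fun j' _ => ?_
      rw [hs, Finset.prod_insert (by simp)]
      by_cases hj : ∀ k : Fin d, q + 1 ≤ (k : ℕ) → j' k = j k
      · rw [if_pos hj, Finset.sum_eq_single (j' ⟨q, hq⟩)]
        · rw [if_pos ⟨rfl, hj⟩, mul_assoc]
        · intro t _ ht
          rw [if_neg (fun h => ht h.1), mul_zero]
        · intro h
          exact absurd (Finset.mem_univ _) h
      · rw [if_neg hj]
        refine Finset.sum_eq_zero fun t _ => ?_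
        rw [if_neg (fun h => hj h.2), mul_zero]
  intro i j
  rw [key d le_rfl i j]
  refine Finset.sum_congr rfl fun j' _ => ?_
  rw [if_pos (fun k hk => absurd k.2 (by omega))]
  simp
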